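/- The set of positive rational numbers T with 9/5 ≤ T ≤ 12/5 such that T·60³ is an integer and (1/T)·60⁴ is an integer has exactly 21 elements: it is the union of the fifteen values {12/5, 64/27, 75/32, 125/54, 9/4, 20/9, 54/25, 32/15, 25/12, 81/40, 2, 48/25, 15/8, 50/27, 9/5} and the six values {288/125, 625/288, 135/64, 256/125, 125/64, 256/135}. -/

import Mathlib

/-!
If `m = T * 60 ^ 3` and `n = T⁻¹ * 60 ^ 4` are integers, then `m * n = 60 ^ 7`. So the admissible
`T` are exactly the `d / 60 ^ 3` with `d` a divisor of `60 ^ 7 = 2 ^ 14 * 3 ^ 7 * 5 ^ 7`, and the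
bounds on `T` say that `d` lies between `388800` and `518400`. This leaves `15 * 8 * 8` triples of
exponents to inspect.
-/

theorem dvd_prime_pow_mul_prime_pow_mul_prime_pow_iff {p q r : ℕ} (hp : p.Prime) (hq : q.Prime)
    (hr : r.Prime) {i j k d : ℕ} :
    d ∣ p ^ i * q ^ j * r ^ k ↔ ∃ a ≤ i, ∃ b ≤ j, ∃ c ≤ k, p ^ a * q ^ b * r ^ c = d := by
  simp only [Nat.dvd_mul, Nat.dvd_prime_pow hp, Nat.dvd_prime_pow hq, Nat.dvd_prime_pow hr]
  constructor
  · rintro ⟨_, _, ⟨_, _, ⟨a, ha, rfl⟩, ⟨b, hb, rfl⟩, rfl⟩, ⟨c, hc, rfl⟩, rfl⟩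
    exact ⟨a, ha, b, hb, c, hc, rfl⟩
  · rintro ⟨a, ha, b, hb, c, hc, rfl⟩
    exact ⟨_, _, ⟨_, _, ⟨a, ha, rfl⟩, ⟨b, hb, rfl⟩, rfl⟩, ⟨c, hc, rfl⟩, rfl⟩

/-- The integers `T * 60 ^ 3` for the values `T` of the theorem, in the same order: the fifteen
rows of Plimpton 322, then the six missing rows. -/
def plimptonNumerators : Finset ℕ :=
  {518400, 512000, 506250, 500000, 486000, 480000, 466560, 460800, 450000, 437400, 432000,
    414720, 405000, 400000, 388800,
    497664, 468750, 455625, 442368, 421875, 409600}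

theorem card_plimptonNumerators : plimptonNumerators.card = 21 := rfl

theorem mem_plimptonNumerators_of_exponents :
    ∀ a ≤ 14, ∀ b ≤ 7, ∀ c ≤ 7,
      388800 ≤ 2 ^ a * 3 ^ b * 5 ^ c ∧ 2 ^ a * 3 ^ b * 5 ^ c ≤ 518400 →
        2 ^ a * 3 ^ b * 5 ^ c ∈ plimptonNumerators := by
  decide +kernel

theorem mem_plimptonNumerators_iff {d : ℕ} :
    d ∈ plimptonNumerators ↔ d ∣ 60 ^ 7 ∧ 388800 ≤ d ∧ d ≤ 518400 := by
  constructor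
  · revert d
    decide +kernel
  · rintro ⟨hd, hbounds⟩
    have factorization : 60 ^ 7 = 2 ^ 14 * 3 ^ 7 * 5 ^ 7 := by norm_num
    rw [factorization, dvd_prime_pow_mul_prime_pow_mul_prime_pow_iff Nat.prime_two
      Nat.prime_three Nat.prime_five] at hd
    obtain ⟨a, ha, b, hb, c, hc, rfl⟩ := hd
    exact mem_plimptonNumerators_of_exponents a ha b hb c hc hbounds

section OrderedField

variable {K : Type*} [Field K] [LinearOrder K] [IsStrictOrderedRing K]

theorem mul_eq_intCast_and_inv_mul_eq_intCast_iff {T : K} (hT : 0 < T) {A B : ℕ} (hA : A ≠ 0) :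
    ((∃ m : ℤ, T * A = m) ∧ ∃ n : ℤ, T⁻¹ * B = n) ↔ ∃ d : ℕ, d ∣ A * B ∧ d / A = T := by
  have hA' : (A : K) ≠ 0 := Nat.cast_ne_zero.mpr hA
  constructor
  · rintro ⟨⟨m, hm⟩, n, hn⟩
    have hm_nonneg : 0 ≤ m := by
      have : (0 : K) ≤ m := hm ▸ by positivity
      exact_mod_cast this
    lift m to ℕ using hm_nonneg
    rw [Int.cast_natCast] at hm
    have hmn : (m : ℤ) * n = (A * B : ℕ) := by
      have : (m : K) * n = A * B := by
        rw [← hm, ← hn]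
        field_simp
      exact_mod_cast this
    exact ⟨m, Int.natCast_dvd_natCast.mp ⟨n, hmn.symm⟩, by rw [← hm, mul_div_cancel_right₀ _ hA']⟩
  · rintro ⟨d, ⟨n, hn⟩, rfl⟩
    have hd : (d : K) ≠ 0 := fun h => by simp [h] at hT
    have hn' : (A : K) * B = d * n := by exact_mod_cast hn
    refine ⟨⟨d, by rw [div_mul_cancel₀ _ hA', Int.cast_natCast]⟩, n, ?_⟩
    rw [inv_div, div_mul_eq_mul_div, hn', mul_div_cancel_left₀ _ hd, Int.cast_natCast]

theorem setOf_fourPlacePair_eq_image_plimptonNumerators :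
    {T : K | 0 < T ∧ 9/5 ≤ T ∧ T ≤ 12/5 ∧
        (∃ m : ℤ, T * 60 ^ 3 = m) ∧ (∃ n : ℤ, T⁻¹ * 60 ^ 4 = n)} =
      (fun d : ℕ => (d : K) / 60 ^ 3) '' plimptonNumerators := by
  have pair_iff {T : K} (hT : 0 < T) :
      ((∃ m : ℤ, T * 60 ^ 3 = m) ∧ ∃ n : ℤ, T⁻¹ * 60 ^ 4 = n) ↔
        ∃ d : ℕ, d ∣ 60 ^ 7 ∧ d / 60 ^ 3 = T := by
    have h := mul_eq_intCast_and_inv_mul_eq_intCast_iff hT (A := 60 ^ 3) (B := 60 ^ 4) (by norm_num)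
    simpa only [Nat.cast_pow, Nat.cast_ofNat, ← pow_add, Nat.reduceAdd] using h
  have lower_iff (d : ℕ) : (9 / 5 : K) ≤ d / 60 ^ 3 ↔ 388800 ≤ d := by
    rw [le_div_iff₀ (by positivity)]
    norm_num
  have upper_iff (d : ℕ) : (d / 60 ^ 3 : K) ≤ 12 / 5 ↔ d ≤ 518400 := by
    rw [div_le_iff₀ (by positivity)]
    norm_num
  ext T
  simp only [Set.mem_ofPred_eq, Set.mem_image, Finset.mem_coe, mem_plimptonNumerators_iff]
  constructor
  · rintro ⟨hT, hlower, hupper, hpair⟩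
    obtain ⟨d, hd, rfl⟩ := (pair_iff hT).mp hpair
    exact ⟨d, ⟨hd, (lower_iff d).mp hlower, (upper_iff d).mp hupper⟩, rfl⟩
  · rintro ⟨d, ⟨hd, hlower, hupper⟩, rfl⟩
    have hT : (0 : K) < d / 60 ^ 3 := lt_of_lt_of_le (by norm_num) ((lower_iff d).mpr hlower)
    exact ⟨hT, (lower_iff d).mpr hlower, (upper_iff d).mpr hupper, (pair_iff hT).mpr ⟨d, hd, rfl⟩⟩

theorem div_sixty_pow_three_injective : Function.Injective fun d : ℕ => (d : K) / 60 ^ 3 :=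
  fun _ _ h => Nat.cast_injective ((div_left_inj' (by norm_num)).mp h)

theorem image_plimptonNumerators :
    (fun d : ℕ => (d : K) / 60 ^ 3) '' plimptonNumerators =
      ({12/5, 64/27, 75/32, 125/54, 9/4, 20/9, 54/25, 32/15, 25/12, 81/40, 2,
        48/25, 15/8, 50/27, 9/5} : Set K) ∪
      ({288/125, 625/288, 135/64, 256/125, 125/64, 256/135} : Set K) := by
  simp only [plimptonNumerators, Finset.coe_insert, Finset.coe_singleton, Set.image_insert_eq,
    Set.image_singleton, Set.insert_union, Set.singleton_union]
  norm_num

theorem plimpton_four_place_pairs_general :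
    {T : K | 0 < T ∧ 9/5 ≤ T ∧ T ≤ 12/5 ∧
        (∃ m : ℤ, T * 60 ^ 3 = m) ∧ (∃ n : ℤ, T⁻¹ * 60 ^ 4 = n)}.ncard = 21 ∧
    {T : K | 0 < T ∧ 9/5 ≤ T ∧ T ≤ 12/5 ∧
        (∃ m : ℤ, T * 60 ^ 3 = m) ∧ (∃ n : ℤ, T⁻¹ * 60 ^ 4 = n)} =
      ({12/5, 64/27, 75/32, 125/54, 9/4, 20/9, 54/25, 32/15, 25/12, 81/40, 2,
        48/25, 15/8, 50/27, 9/5} : Set K) ∪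
      ({288/125, 625/288, 135/64, 256/125, 125/64, 256/135} : Set K) := by
  rw [setOf_fourPlacePair_eq_image_plimptonNumerators]
  refine ⟨?_, image_plimptonNumerators⟩
  rw [Set.ncard_image_of_injective _ div_sixty_pow_three_injective, Set.ncard_coe_finset,
    card_plimptonNumerators]

end OrderedField

theorem plimpton_four_place_pairs :
    {T : ℚ | 0 < T ∧ 9/5 ≤ T ∧ T ≤ 12/5 ∧
        (∃ m : ℤ, T * 60 ^ 3 = m) ∧ (∃ n : ℤ, T⁻¹ * 60 ^ 4 = n)}.ncard = 21 ∧
    {T : ℚ | 0 < T ∧ 9/5 ≤ T ∧ T ≤ 12/5 ∧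
        (∃ m : ℤ, T * 60 ^ 3 = m) ∧ (∃ n : ℤ, T⁻¹ * 60 ^ 4 = n)} =
      ({12/5, 64/27, 75/32, 125/54, 9/4, 20/9, 54/25, 32/15, 25/12, 81/40, 2,
        48/25, 15/8, 50/27, 9/5} : Set ℚ) ∪
      ({288/125, 625/288, 135/64, 256/125, 125/64, 256/135} : Set ℚ) :=
  plimpton_four_place_pairs_general
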